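/- arXiv:1904.05302 — 3 statements merged into one kernel-verified Lean document; each statement's English description precedes it below -/
import Mathlib

section
/- Let P be a complex polynomial of degree 2 having no zeros in |z| < 1, let α ∈ ℂ with |α| ≤ 1, and let R ≥ 1. Then max_{|z|=R}|P(z)| ≤ ((R^2 + 1)/2)·max_{|z|=1}|P(z)| − |α|·((R^2 − 1)/2)·min_{|z|=1}|P(z)| − ((R − 1)^2/2)·|P′(0)|. -/
open Polynomial Metric

/-- The maximum of `|P(z)|` over the circle `|z| = r`. -/
noncomputable def maxMod (P : Polynomial ℂ) (r : ℝ) : ℝ :=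
  ⨆ z : sphere (0 : ℂ) r, ‖(P.eval z : ℂ)‖

/-- The minimum of `|P(z)|` over the circle `|z| = r`. -/
noncomputable def minMod (P : Polynomial ℂ) (r : ℝ) : ℝ :=
  ⨅ z : sphere (0 : ℂ) r, ‖(P.eval z : ℂ)‖


lemma aux_align (X Y : ℂ) : ∃ g : ℂ, ‖g‖ = 1 ∧ ‖X + g * Y‖ = ‖X‖ + ‖Y‖ := by
  by_cases hX : X = 0
  · exact ⟨1, by simp, by simp [hX]⟩
  by_cases hY : Y = 0
  · exact ⟨1, by simp, by simp [hY]⟩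
  have hX' : (‖X‖ : ℂ) ≠ 0 := by simpa using hX
  have hY' : (‖Y‖ : ℂ) ≠ 0 := by simpa using hY
  have hXr : ‖X‖ ≠ 0 := by simpa using hX
  have hYr : ‖Y‖ ≠ 0 := by simpa using hY
  refine ⟨X / ‖X‖ * (‖Y‖ / Y), ?_, ?_⟩
  · simp only [norm_mul, norm_div, Complex.norm_real, norm_norm]
    field_simp
  · have : X + X / ‖X‖ * (‖Y‖ / Y) * Y = X / ‖X‖ * ((‖X‖ + ‖Y‖ : ℝ) : ℂ) := by
      push_cast
      field_simp
    rw [this, norm_mul, norm_div, Complex.norm_real, Complex.norm_real, norm_norm,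
      Real.norm_of_nonneg (by positivity), div_self hXr, one_mul]

lemma aux_half (x : ℂ) (h : ‖x‖ ≤ ‖x - 1‖) : x.re ≤ 1 / 2 := by
  have h2 := mul_self_le_mul_self (norm_nonneg _) h
  rw [Complex.norm_mul_self_eq_normSq, Complex.norm_mul_self_eq_normSq, Complex.normSq_apply,
    Complex.normSq_apply] at h2
  simp at h2
  nlinarith

lemma aux_half' (x : ℂ) (h : x.re ≤ 1) : ‖x‖ ≤ ‖2 - x‖ := by
  refine (sq_le_sq₀ (norm_nonneg _) (norm_nonneg _)).1 ?_
  rw [Complex.sq_norm, Complex.sq_norm, Complex.normSq_apply, Complex.normSq_apply]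
  simp
  nlinarith

lemma aux_re (z u : ℂ) (hz : ‖z‖ = 1) (hu : 1 ≤ ‖u‖) (h : z - u ≠ 0) : (z / (z - u)).re ≤ 1 / 2 := by
  apply aux_half
  have : z / (z - u) - 1 = u / (z - u) := by field_simp; ring
  rw [this, norm_div, norm_div, hz]
  gcongr

/-- Key comparison for quadratics without zeros in the open disc. -/
lemma aux_cmp (a b c z : ℂ) (hc : c ≠ 0) (hz : ‖z‖ = 1)
    (h : ∀ w : ℂ, a + b * w + c * w ^ 2 = 0 → 1 ≤ ‖w‖) : ‖b + 2 * c * z‖ ≤ ‖2 * a + b * z‖ := by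
  obtain ⟨s, hs⟩ := IsAlgClosed.exists_pow_nat_eq (b ^ 2 - 4 * a * c) (n := 2) (by norm_num)
  obtain ⟨u, hu⟩ : ∃ u, u = (-b + s) / (2 * c) := ⟨_, rfl⟩
  obtain ⟨v, hv⟩ : ∃ v, v = (-b - s) / (2 * c) := ⟨_, rfl⟩
  have hb : b = -c * (u + v) := by rw [hu, hv]; field_simp; ring
  have ha : a = c * (u * v) := by
    rw [hu, hv]; field_simp; linear_combination hs
  have hu1 : 1 ≤ ‖u‖ := h u (by rw [hb, ha]; ring)
  have hv1 : 1 ≤ ‖v‖ := h v (by rw [hb, ha]; ring)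
  have e1 : b + 2 * c * z = c * ((z - u) + (z - v)) := by rw [hb]; ring
  have e2 : 2 * a + b * z = -c * ((z - u) * v + (z - v) * u) := by rw [hb, ha]; ring
  rw [e1, e2, norm_mul, norm_mul, norm_neg]
  apply mul_le_mul_of_nonneg_left _ (norm_nonneg _)
  by_cases hA : z - u = 0
  · rw [hA]; simp only [zero_add, zero_mul, norm_mul]
    nlinarith [norm_nonneg (z - v)]
  by_cases hB : z - v = 0
  · rw [hB]; simp only [add_zero, zero_mul, norm_mul]
    nlinarith [norm_nonneg (z - u)]
  have k := aux_half' (z / (z - u) + z / (z - v)) (by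
    have := aux_re z u hz hu1 hA
    have := aux_re z v hz hv1 hB
    rw [Complex.add_re]; linarith)
  have f1 : (z - u) + (z - v) = ((z - u) * (z - v)) * (z / (z - u) + z / (z - v)) / z := by
    have : z ≠ 0 := by rintro rfl; simp at hz
    field_simp; ring
  have f2 : (z - u) * v + (z - v) * u =
      -(((z - u) * (z - v)) * (2 - (z / (z - u) + z / (z - v)))) := by
    field_simp; ring
  rw [f1, f2, norm_neg, norm_div, hz, div_one, norm_mul, norm_mul _ (2 - _)]
  gcongr

/-- Minimum modulus principle. -/
lemma aux_min (a b c : ℂ) (m : ℝ) (hm : 0 < m)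
    (h : ∀ w : ℂ, a + b * w + c * w ^ 2 = 0 → 1 ≤ ‖w‖)
    (hmin : ∀ w : ℂ, ‖w‖ = 1 → m ≤ ‖a + b * w + c * w ^ 2‖) (w : ℂ) (hw : ‖w‖ < 1) :
    m ≤ ‖a + b * w + c * w ^ 2‖ := by
  have hne : ∀ x ∈ closedBall (0 : ℂ) 1, a + b * x + c * x ^ 2 ≠ 0 := by
    intro x hx h0
    have h1 : ‖x‖ = 1 := le_antisymm (by simpa using hx) (h x h0)
    have := hmin x h1
    rw [h0, norm_zero] at this
    linarith
  have key := Complex.norm_le_of_forall_mem_frontier_norm_le (U := ball (0 : ℂ) 1)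
    (f := fun x => (a + b * x + c * x ^ 2)⁻¹) (C := m⁻¹) isBounded_ball
    (by
      apply DifferentiableOn.diffContOnCl
      rw [closure_ball _ one_ne_zero]
      apply DifferentiableOn.inv _ hne
      fun_prop)
    (by
      intro x hx
      rw [frontier_ball _ one_ne_zero] at hx
      rw [norm_inv]
      exact inv_anti₀ hm (hmin x (by simpa using hx)))
    (z := w) (subset_closure (by simpa using hw))
  rw [norm_inv] at key
  have hpos : 0 < ‖a + b * w + c * w ^ 2‖ := norm_pos_iff.2 (hne w (by simpa using hw.le))
  exact (inv_le_inv₀ hpos hm).1 key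

lemma aux_cmp_m (a b c z : ℂ) (m : ℝ) (hm : 0 ≤ m) (hc : c ≠ 0) (hz : ‖z‖ = 1)
    (h : ∀ w : ℂ, a + b * w + c * w ^ 2 = 0 → 1 ≤ ‖w‖)
    (hmin : ∀ w : ℂ, ‖w‖ = 1 → m ≤ ‖a + b * w + c * w ^ 2‖) :
    ‖b + 2 * c * z‖ + 2 * m ≤ ‖2 * a + b * z‖ := by
  rcases hm.eq_or_lt with rfl | hm
  · simpa using aux_cmp a b c z hc hz h
  have key : ∀ μ : ℂ, ‖μ‖ < 2 * m → ‖b + 2 * c * z‖ ≤ ‖2 * a + b * z + μ‖ := by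
    intro μ hμ
    have := aux_cmp (a + μ / 2) b c z hc hz (by
      intro w hw
      by_contra! hlt
      have h1 := aux_min a b c m hm h hmin w hlt
      have h2 : a + b * w + c * w ^ 2 = -(μ / 2) := by linear_combination hw
      rw [h2, norm_neg, norm_div] at h1
      simp at h1
      linarith)
    convert this using 2
    ring
  have hD : 2 * m ≤ ‖2 * a + b * z‖ := by
    by_contra! hlt
    have h1 := key (-(2 * a + b * z)) (by rwa [norm_neg])
    rw [add_neg_cancel, norm_zero] at h1
    have h2 : b + 2 * c * z = 0 := norm_le_zero_iff.1 h1
    have h3 : 2 * a + b * z = 2 * (a + b * z + c * z ^ 2) := by linear_combination -z * h2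
    have h4 := hmin z hz
    rw [h3, norm_mul] at hlt
    simp at hlt
    linarith
  apply le_of_forall_pos_sub_le
  intro ε hε
  obtain ⟨D, hDd⟩ : ∃ D, D = 2 * a + b * z := ⟨_, rfl⟩
  rw [← hDd] at hD ⊢
  have hDpos : 0 < ‖D‖ := by linarith
  obtain ⟨t, ht0, ht1, ht2⟩ : ∃ t : ℝ, 0 ≤ t ∧ t < 2 * m ∧ 2 * m - ε ≤ t :=
    ⟨max 0 (2 * m - ε), le_max_left _ _, max_lt (by linarith) (by linarith), le_max_right _ _⟩
  have h1 := key (-((t / ‖D‖ : ℝ) : ℂ) * D) (by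
    rw [norm_mul, norm_neg, Complex.norm_real, Real.norm_of_nonneg (by positivity),
      div_mul_cancel₀ _ hDpos.ne']
    exact ht1)
  have h2 : 2 * a + b * z + -((t / ‖D‖ : ℝ) : ℂ) * D = ((1 - t / ‖D‖ : ℝ) : ℂ) * D := by
    rw [← hDd]; push_cast; ring
  have h3 : t / ‖D‖ ≤ 1 := by rw [div_le_one hDpos]; linarith
  rw [h2, norm_mul, Complex.norm_real, Real.norm_of_nonneg (by linarith), sub_mul,
    div_mul_cancel₀ _ hDpos.ne'] at h1
  linarith

lemma aux_sum (a b c z : ℂ) (M : ℝ) (hz : ‖z‖ = 1)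
    (hmax : ∀ w : ℂ, ‖w‖ = 1 → ‖a + b * w + c * w ^ 2‖ ≤ M) :
    ‖b + 2 * c * z‖ + ‖2 * a + b * z‖ ≤ 2 * M := by
  obtain ⟨g, hg, hgg⟩ := aux_align (z * (b + 2 * c * z)) (2 * a + b * z)
  rw [norm_mul, hz, one_mul] at hgg
  rw [← hgg]
  have hg0 : g ≠ 0 := by rintro rfl; simp at hg
  obtain ⟨s, hs⟩ := IsAlgClosed.exists_pow_nat_eq g⁻¹ (n := 2) (by norm_num)
  have hsn : ‖s‖ = 1 := by
    have : ‖s‖ ^ 2 = 1 := by rw [← norm_pow, hs, norm_inv, hg, inv_one]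
    exact (pow_eq_one_iff_of_nonneg (norm_nonneg _) two_ne_zero).1 this
  have hgs : g * s ^ 2 = 1 := by rw [hs]; exact mul_inv_cancel₀ hg0
  have hre : 2 * (s.re : ℂ) * s = s ^ 2 + 1 := by
    have h1 : s * (starRingEnd ℂ) s = 1 := by
      rw [Complex.mul_conj, Complex.normSq_eq_norm_sq, hsn]; simp
    have h2 := Complex.add_conj s
    push_cast at h2
    linear_combination h1 - s * h2
  have hle := abs_le.1 ((Complex.abs_re_le_norm s).trans hsn.le)
  have e : z * (b + 2 * c * z) + g * (2 * a + b * z) =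
      g * (((1 + s.re : ℝ) : ℂ) * (a + b * (z * s) + c * (z * s) ^ 2) +
        ((1 - s.re : ℝ) : ℂ) * (a + b * (-(z * s)) + c * (-(z * s)) ^ 2)) := by
    push_cast
    linear_combination (-2 * c * z ^ 2 - z * b) * hgs - g * b * z * hre
  rw [e, norm_mul, hg, one_mul]
  have m1 := hmax (z * s) (by simp [hz, hsn])
  have m2 := hmax (-(z * s)) (by simp [hz, hsn])
  refine (norm_add_le _ _).trans ?_
  rw [norm_mul, norm_mul, Complex.norm_real, Complex.norm_real,
    Real.norm_of_nonneg (by linarith), Real.norm_of_nonneg (by linarith)]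
  nlinarith

theorem stmt_8 (P : Polynomial ℂ) (hdeg : P.natDegree = 2)
    (hroots : ∀ w : ℂ, P.IsRoot w → 1 ≤ ‖w‖)
    (α : ℂ) (hα : ‖α‖ ≤ 1) (R : ℝ) (hR : 1 ≤ R) :
    maxMod P R ≤
      ((R ^ 2 + 1) / 2) * maxMod P 1 -
        ‖α‖ * ((R ^ 2 - 1) / 2) * minMod P 1 -
        ((R - 1) ^ 2 / 2) * ‖(Polynomial.derivative P).eval 0‖ := by
  obtain ⟨a, ha⟩ : ∃ a, a = P.coeff 0 := ⟨_, rfl⟩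
  obtain ⟨b, hb⟩ : ∃ b, b = P.coeff 1 := ⟨_, rfl⟩
  obtain ⟨c, hc⟩ : ∃ c, c = P.coeff 2 := ⟨_, rfl⟩
  have hc0 : c ≠ 0 := by
    rw [hc, ← hdeg]
    simp only [coeff_natDegree, ne_eq, leadingCoeff_eq_zero]
    rintro rfl
    simp at hdeg
  have hev : ∀ w, P.eval w = a + b * w + c * w ^ 2 := by
    intro w
    rw [Polynomial.eval_eq_sum_range, hdeg, ha, hb, hc]
    simp [Finset.sum_range_succ]
  have hder : (Polynomial.derivative P).eval 0 = b := by
    rw [← Polynomial.coeff_zero_eq_eval_zero, Polynomial.coeff_derivative, hb]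
    simp
  have hmax : ∀ w : ℂ, ‖w‖ = 1 → ‖a + b * w + c * w ^ 2‖ ≤ maxMod P 1 := by
    intro w hw
    have hcont : Continuous (fun z : sphere (0 : ℂ) 1 => ‖(P.eval (z : ℂ) : ℂ)‖) := by fun_prop
    have := le_ciSup (isCompact_range hcont).bddAbove ⟨w, by simpa using hw⟩
    rw [← hev]
    exact this
  have hmin : ∀ w : ℂ, ‖w‖ = 1 → minMod P 1 ≤ ‖a + b * w + c * w ^ 2‖ := by
    intro w hw
    have hbd : BddBelow (Set.range (fun z : sphere (0 : ℂ) 1 => ‖(P.eval (z : ℂ) : ℂ)‖)) :=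
      ⟨0, by rintro _ ⟨z, rfl⟩; exact norm_nonneg _⟩
    have := ciInf_le hbd ⟨w, by simpa using hw⟩
    rw [← hev]
    exact this
  have hm0 : 0 ≤ minMod P 1 := Real.iInf_nonneg fun _ => norm_nonneg _
  have hr : ∀ w : ℂ, a + b * w + c * w ^ 2 = 0 → 1 ≤ ‖w‖ := by
    intro w hw
    exact hroots w (by rw [Polynomial.IsRoot, hev, hw])
  rw [hder]
  generalize maxMod P 1 = M at *
  generalize minMod P 1 = m at *
  have hkey : ‖b‖ + 2 * ‖c‖ ≤ M - m := by
    obtain ⟨z, hz, hzz⟩ := aux_align b (2 * c)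
    have h1 := aux_cmp_m a b c z m hm0 hc0 hz hr hmin
    have h2 := aux_sum a b c z M hz hmax
    rw [show z * (2 * c) = 2 * c * z by ring, norm_mul] at hzz
    rw [hzz] at h1 h2
    simp at h1 h2
    linarith
  have : Nonempty (sphere (0 : ℂ) R) := ⟨⟨(R : ℂ), by simp; linarith⟩⟩
  apply ciSup_le
  rintro ⟨w, hw⟩
  have hw' : ‖w‖ = R := by simpa using hw
  have hR0 : (R : ℂ) ≠ 0 := by
    have : R ≠ 0 := by linarith
    exact_mod_cast this
  obtain ⟨z, hzw⟩ : ∃ z, w = R * z := ⟨w / R, by field_simp⟩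
  have hz : ‖z‖ = 1 := by
    rw [hzw, norm_mul, Complex.norm_real, Real.norm_of_nonneg (by linarith)] at hw'
    exact mul_left_cancel₀ (by linarith) (hw'.trans (mul_one R).symm)
  have hR2 : 0 ≤ R ^ 2 - 1 := by nlinarith
  have hPw : ‖P.eval w‖ ≤ M + (R - 1) * ‖b‖ + (R ^ 2 - 1) * ‖c‖ := by
    have e : P.eval w = (a + b * z + c * z ^ 2) + ((R - 1 : ℝ) : ℂ) * (b * z) +
        ((R ^ 2 - 1 : ℝ) : ℂ) * (c * z ^ 2) := by
      rw [hev, hzw]; push_cast; ring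
    rw [e]
    refine norm_add₃_le.trans ?_
    have := hmax z hz
    simp only [norm_mul, norm_pow, hz, Complex.norm_real, one_pow, mul_one,
      Real.norm_of_nonneg hR2, Real.norm_of_nonneg (sub_nonneg.2 hR)]
    linarith
  have hα2 : ‖α‖ * ((R ^ 2 - 1) / 2) * m ≤ (R ^ 2 - 1) / 2 * m := by
    have : 0 ≤ (R ^ 2 - 1) / 2 * m := by positivity
    nlinarith
  have := mul_le_mul_of_nonneg_left hkey hR2
  show ‖P.eval w‖ ≤ _
  nlinarith
end

section
/- (Dubinin's inequality) Let P(z) = ∑_{j=0}^{n} a_j z^j be a complex polynomial of degree n ≥ 1 all of whose zeros lie in |z| ≤ 1. Then max_{|z|=1}|P′(z)| ≥ (1/2)·(n + (|a_n| − |a_0|)/(|a_n| + |a_0|))·max_{|z|=1}|P(z)|. -/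
open Polynomial Metric

lemma aux_pt (z w : ℂ) (hz : ‖z‖ = 1) (hw : ‖w‖ ≤ 1) (hne : z - w ≠ 0) :
    1 / (1 + ‖w‖) ≤ (z * (1 / (z - w))).re := by
  have h1 : z.re * z.re + z.im * z.im = 1 := by
    have := Complex.normSq_eq_norm_sq z
    rw [hz, Complex.normSq_apply] at this; linarith
  have h2 : w.re * w.re + w.im * w.im = ‖w‖ ^ 2 := by
    rw [← Complex.normSq_eq_norm_sq w, Complex.normSq_apply]
  have hd : 0 < Complex.normSq (z - w) := Complex.normSq_pos.2 hne
  have ht : 0 ≤ ‖w‖ := norm_nonneg w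
  have hc : -‖w‖ ≤ z.re * w.re + z.im * w.im := by
    have := Complex.abs_re_le_norm (z * (starRingEnd ℂ) w)
    rw [norm_mul, hz, RCLike.norm_conj, one_mul] at this
    have h3 := (abs_le.1 this).1
    simp at h3
    linarith
  have he : (z * (1 / (z - w))).re = (1 - (z.re * w.re + z.im * w.im)) / Complex.normSq (z - w) := by
    rw [mul_one_div, Complex.div_re, ← add_div]
    congr 1
    simp
    linarith
  rw [he, div_le_div_iff₀ (by linarith) hd]
  have hq : Complex.normSq (z - w) = 1 - 2 * (z.re * w.re + z.im * w.im) + ‖w‖ ^ 2 := by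
    rw [Complex.normSq_apply]; simp; linarith
  rw [hq]
  nlinarith [mul_nonneg (sub_nonneg.2 hw) (by linarith : 0 ≤ ‖w‖ + (z.re * w.re + z.im * w.im))]

lemma aux_two (a b : ℝ) (ha : 0 ≤ a) (ha1 : a ≤ 1) (hb : 0 ≤ b) (hb1 : b ≤ 1) :
    1 / 2 * (1 + (1 - a * b) / (1 + a * b)) ≤ 1 / (1 + a) + 1 / 2 * ((1 - b) / (1 + b)) := by
  have hab : 0 ≤ a * b := mul_nonneg ha hb
  have e : 1 / (1 + a) + 1 / 2 * ((1 - b) / (1 + b)) - 1 / 2 * (1 + (1 - a * b) / (1 + a * b))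
      = (1 - a) * (1 - b) * (1 - a * b) / (2 * (1 + a) * (1 + b) * (1 + a * b)) := by
    have : 1 + a ≠ 0 := by positivity
    have : 1 + b ≠ 0 := by positivity
    have : 1 + a * b ≠ 0 := by positivity
    field_simp
    ring
  have : 0 ≤ (1 - a) * (1 - b) * (1 - a * b) / (2 * (1 + a) * (1 + b) * (1 + a * b)) := by
    have h1 : 0 ≤ 1 - a := by linarith
    have h2 : 0 ≤ 1 - b := by linarith
    have h3 : 0 ≤ 1 - a * b := by nlinarith
    positivity
  linarith

lemma aux_sum_s12 (z : ℂ) (hz : ‖z‖ = 1) (s : Multiset ℂ) (hs : ∀ w ∈ s, ‖w‖ ≤ 1 ∧ z - w ≠ 0) :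
    ‖s.prod‖ ≤ 1 ∧
    1 / 2 * ((s.card : ℝ) + (1 - ‖s.prod‖) / (1 + ‖s.prod‖)) ≤
      (z * (s.map fun w => 1 / (z - w)).sum).re := by
  induction s using Multiset.induction_on with
  | empty => simp
  | cons a s ih =>
    obtain ⟨i1, i2⟩ := ih fun w hw => hs w (Multiset.mem_cons_of_mem hw)
    obtain ⟨h1, h2⟩ := hs a (Multiset.mem_cons_self a s)
    have hp := aux_pt z a hz h1 h2
    have ht := aux_two ‖a‖ ‖s.prod‖ (norm_nonneg _) h1 (norm_nonneg _) i1
    rw [Multiset.prod_cons, norm_mul]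
    refine ⟨mul_le_one₀ h1 (norm_nonneg _) i1, ?_⟩
    rw [Multiset.map_cons, Multiset.sum_cons, mul_add z, Complex.add_re, Multiset.card_cons]
    push_cast
    linarith

theorem stmt_12 (n : ℕ) (hn : 1 ≤ n) (P : Polynomial ℂ) (hdeg : P.natDegree = n)
    (hroots : ∀ w : ℂ, P.IsRoot w → ‖w‖ ≤ 1) :
    maxMod (Polynomial.derivative P) 1 ≥
      (1 / 2) *
        ((n : ℝ) + (‖P.coeff n‖ - ‖P.coeff 0‖) /
            (‖P.coeff n‖ + ‖P.coeff 0‖)) *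
        maxMod P 1 := by
  have hP : P ≠ 0 := by rintro rfl; simp at hdeg; omega
  have hsp : P.Splits := IsAlgClosed.splits P
  have hbdd : BddAbove (Set.range fun z : sphere (0 : ℂ) 1 => ‖((derivative P).eval (z : ℂ) : ℂ)‖) := by
    apply IsCompact.bddAbove
    apply isCompact_range
    fun_prop
  have hcard : P.roots.card = n := by rw [← hdeg]; exact hsp.natDegree_eq_card_roots.symm
  have hc0 : ‖P.coeff 0‖ = ‖P.coeff n‖ * ‖P.roots.prod‖ := by
    rw [hsp.coeff_zero_eq_leadingCoeff_mul_prod_roots, Polynomial.leadingCoeff, hdeg]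
    simp
  have hcn : 0 < ‖P.coeff n‖ := by
    rw [norm_pos_iff, ← hdeg]; simpa using hP
  have hq : (‖P.coeff n‖ - ‖P.coeff 0‖) / (‖P.coeff n‖ + ‖P.coeff 0‖)
      = (1 - ‖P.roots.prod‖) / (1 + ‖P.roots.prod‖) := by
    rw [hc0]
    have : 1 + ‖P.roots.prod‖ ≠ 0 := by positivity
    have : ‖P.coeff n‖ + ‖P.coeff n‖ * ‖P.roots.prod‖ ≠ 0 := by positivity
    field_simp
  rw [hq, ge_iff_le]
  have hmem : ∀ w ∈ P.roots, ‖w‖ ≤ 1 := fun w hw => hroots w (Polynomial.isRoot_of_mem_roots hw)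
  have hprod : ‖P.roots.prod‖ ≤ 1 := by
    have : ‖P.coeff 0‖ = ‖P.coeff 0‖ := rfl
    have key : ∀ s : Multiset ℂ, (∀ w ∈ s, ‖w‖ ≤ 1) → ‖s.prod‖ ≤ 1 := by
      intro s
      induction s using Multiset.induction_on with
      | empty => simp
      | cons a s ih =>
        intro h
        rw [Multiset.prod_cons, norm_mul]
        exact mul_le_one₀ (h a (Multiset.mem_cons_self a s)) (norm_nonneg _)
          (ih fun w hw => h w (Multiset.mem_cons_of_mem hw))
    exact key _ hmem
  have hK : 0 ≤ 1 / 2 * ((n : ℝ) + (1 - ‖P.roots.prod‖) / (1 + ‖P.roots.prod‖)) := by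
    have : 0 ≤ 1 - ‖P.roots.prod‖ := by linarith
    positivity
  haveI : Nonempty (sphere (0 : ℂ) 1) := ⟨⟨1, by simp⟩⟩
  unfold maxMod
  rw [Real.mul_iSup_of_nonneg hK]
  apply ciSup_le
  intro z
  refine le_trans ?_ (le_ciSup hbdd z)
  have hz : ‖(z : ℂ)‖ = 1 := by simpa using z.2
  by_cases h0 : P.eval (z : ℂ) = 0
  · simp [h0]
  have hs := (aux_sum_s12 z hz P.roots (fun w hw => ⟨hmem w hw, fun h => h0 (by
    rw [sub_eq_zero.1 h]; exact Polynomial.isRoot_of_mem_roots hw)⟩)).2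
  rw [hcard] at hs
  have hd := hsp.eval_derivative_div_eval_of_ne_zero h0
  rw [← hd] at hs
  have h3 := hs.trans (Complex.re_le_norm _)
  rw [norm_mul, hz, one_mul, norm_div, le_div_iff₀ (norm_pos_iff.2 h0)] at h3
  exact h3
end

section
/- (Frappier–Rahman–Ruscheweyh) Let P be a complex polynomial of degree n > 1 and let R ≥ 1. Then max_{|z|=R}|P(z)| ≤ R^n·max_{|z|=1}|P(z)| − (R^n − R^{n−2})·|P(0)|. -/
open Polynomial Metric

lemma le_maxMod (P : Polynomial ℂ) (r : ℝ) (z : ℂ) (hz : ‖z‖ = r) :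
    ‖P.eval z‖ ≤ maxMod P r := by
  have hb : BddAbove (Set.range fun z : sphere (0 : ℂ) r => ‖(P.eval (z : ℂ) : ℂ)‖) := by
    have : CompactSpace (sphere (0 : ℂ) r) := isCompact_iff_compactSpace.mp (isCompact_sphere _ _)
    exact (isCompact_range (by fun_prop)).bddAbove
  exact le_ciSup hb (⟨z, by simpa using hz⟩ : sphere (0 : ℂ) r)

lemma exists_align (A B : ℂ) : ∃ l : ℂ, ‖l‖ = 1 ∧ ‖A + l * B‖ = ‖A‖ + ‖B‖ := by
  by_cases hA : A = 0
  · exact ⟨1, by simp, by simp [hA]⟩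
  by_cases hB : B = 0
  · exact ⟨1, by simp, by simp [hB]⟩
  have hA' : (‖A‖ : ℂ) ≠ 0 := by simpa using hA
  have hB' : (‖B‖ : ℂ) ≠ 0 := by simpa using hB
  have hA2 : ‖A‖ ≠ 0 := by simpa using hA
  have hB2 : ‖B‖ ≠ 0 := by simpa using hB
  refine ⟨(A / ‖A‖) * (‖B‖ / B), ?_, ?_⟩
  · simp [hA2, hB2]
  · have : A + (A / ‖A‖) * (‖B‖ / B) * B = (A / ‖A‖) * ((‖A‖ + ‖B‖ : ℝ) : ℂ) := by
      push_cast
      field_simp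
    rw [this, norm_mul, Complex.norm_real, Real.norm_of_nonneg (by positivity)]
    simp [hA2]

lemma root_norm (m : ℕ) (r : ℝ) (h0 : 0 < r) (h1 : r < 1) (l z : ℂ) (hl : ‖l‖ = 1)
    (h : z ^ (m + 1) * (z - r) = l * (1 - r * z)) : ‖z‖ = 1 := by
  have hn : ‖z‖ ^ (m + 1) * ‖z - r‖ = ‖1 - r * z‖ := by
    have := congrArg norm h
    simpa [hl] using this
  have hid : ‖1 - r * z‖ ^ 2 - ‖z - r‖ ^ 2 = (1 - r ^ 2) * (1 - ‖z‖ ^ 2) := by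
    simp only [Complex.sq_norm, Complex.normSq_apply]
    simp
    ring
  have hr : 0 < 1 - r ^ 2 := by nlinarith
  have ha := norm_nonneg (z - r)
  rcases lt_trichotomy ‖z‖ 1 with hz | hz | hz
  · have hp : ‖z‖ ^ (m + 1) ≤ 1 := pow_le_one₀ (norm_nonneg z) hz.le
    have h3 : 0 < (1 - r ^ 2) * (1 - ‖z‖ ^ 2) :=
      mul_pos hr (by nlinarith [norm_nonneg z])
    have h4 : ‖1 - r * z‖ ≤ ‖z - r‖ := by rw [← hn]; nlinarith
    nlinarith [norm_nonneg (1 - r * z)]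
  · exact hz
  · have hp : 1 ≤ ‖z‖ ^ (m + 1) := one_le_pow₀ hz.le
    have h3 : 0 < (1 - r ^ 2) * (‖z‖ ^ 2 - 1) :=
      mul_pos hr (by nlinarith [norm_nonneg z])
    have h4 : ‖z - r‖ ≤ ‖1 - r * z‖ := by rw [← hn]; nlinarith
    nlinarith [norm_nonneg (1 - r * z)]

/-- para-orthogonal polynomial -/
noncomputable def WW (m : ℕ) (r l : ℂ) : ℂ[X] :=
  X ^ (m + 1) * (X - C r) - C l * (1 - C r * X)

lemma WW_eval (m : ℕ) (r l z : ℂ) :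
    (WW m r l).eval z = z ^ (m + 1) * (z - r) - l * (1 - r * z) := by
  simp [WW]

lemma WW_lt (m : ℕ) (r l : ℂ) :
    (C l * (1 - C r * X)).degree < (X ^ (m + 1) * (X - C r) : ℂ[X]).degree := by
  have h1 : (C l * (1 - C r * X)).degree ≤ 1 := by
    compute_degree
  have h2 : (X ^ (m + 1) * (X - C r) : ℂ[X]).degree = ((m + 2 : ℕ) : WithBot ℕ) := by
    rw [degree_mul, degree_X_pow, degree_X_sub_C]; norm_cast
  rw [h2]
  refine lt_of_le_of_lt h1 ?_
  exact_mod_cast (by omega : 1 < m + 2)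

lemma WW_monic (m : ℕ) (r l : ℂ) : (WW m r l).Monic :=
  ((monic_X_pow _).mul (monic_X_sub_C r)).sub_of_left (WW_lt m r l)

lemma WW_degree (m : ℕ) (r l : ℂ) : (WW m r l).degree = ((m + 2 : ℕ) : WithBot ℕ) := by
  rw [WW, degree_sub_eq_left_of_degree_lt (WW_lt m r l), degree_mul, degree_X_pow,
    degree_X_sub_C]
  norm_cast

lemma WW_deriv (m : ℕ) (r : ℝ) (l z : ℂ) (hz : ‖z‖ = 1)
    (h : z ^ (m + 1) * (z - r) = l * (1 - r * z)) :
    (z - r) * (derivative (WW m r l)).eval z =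
      l * (((m + 1) * ‖z - r‖ ^ 2 + (1 - r ^ 2) : ℝ) : ℂ) := by
  have hc : z * (starRingEnd ℂ) z = 1 := by
    rw [Complex.mul_conj, Complex.normSq_eq_norm_sq, hz]; simp
  have hD : ((‖z - r‖ ^ 2 : ℝ) : ℂ) = (z - r) * ((starRingEnd ℂ) z - r) := by
    rw [← Complex.normSq_eq_norm_sq, ← Complex.mul_conj]; simp
  have hm : z ^ m * (z - r) = l * ((starRingEnd ℂ) z - r) := by
    have : z ^ m * (z - r) = (starRingEnd ℂ) z * (z ^ (m + 1) * (z - r)) := by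
      rw [pow_succ]; linear_combination (-(z ^ m * (z - r))) * hc
    rw [this, h]; linear_combination (-(l * r)) * hc
  have e : (derivative (WW m r l)).eval z =
      (m + 1) * z ^ m * (z - r) + z ^ (m + 1) + l * r := by
    simp [WW, derivative_pow]
  rw [e]
  push_cast at hD ⊢
  rw [hD]
  linear_combination (m + 1) * (z - r) * hm + h

lemma key (m : ℕ) (Q : ℂ[X]) (hQ : Q.natDegree ≤ m + 2) (r : ℝ) (h0 : 0 < r) (h1 : r < 1)
    (M : ℝ) (hM : ∀ z : ℂ, ‖z‖ = 1 → ‖Q.eval z‖ ≤ M) :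
    ‖Q.eval (r : ℂ)‖ + (1 - r ^ 2) * ‖Q.coeff (m + 2)‖ ≤ M := by
  have hr : 0 < 1 - r ^ 2 := by nlinarith
  obtain ⟨l, hl, hal⟩ := exists_align (Q.eval (r : ℂ)) ((1 - r ^ 2 : ℝ) * Q.coeff (m + 2))
  rw [norm_mul, Complex.norm_real, Real.norm_of_nonneg hr.le] at hal
  rw [← hal]
  have hl0 : l ≠ 0 := by rintro rfl; simp at hl
  set W := WW m r l with hW
  have hWm : W.Monic := WW_monic _ _ _
  have hW0 : W ≠ 0 := hWm.ne_zero
  have hroot : ∀ z ∈ W.roots, z ^ (m + 1) * (z - r) = l * (1 - r * z) := by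
    intro z hz
    have := (mem_roots hW0).1 hz
    rw [IsRoot, hW, WW_eval] at this
    exact sub_eq_zero.1 this
  have hnorm : ∀ z ∈ W.roots, ‖z‖ = 1 := fun z hz => root_norm m r h0 h1 l z hl (hroot z hz)
  have hpos : ∀ z : ℂ, 0 < ((m + 1) * ‖z - r‖ ^ 2 + (1 - r ^ 2) : ℝ) := fun z => by positivity
  have hder := fun z hz => WW_deriv m r l z (hnorm z hz) (hroot z hz)
  have hnd : W.roots.Nodup := by
    rw [Multiset.nodup_iff_count_le_one]
    intro z
    by_contra hcon
    rw [count_roots, not_le, one_lt_rootMultiplicity_iff_isRoot hW0] at hcon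
    have hz : z ∈ W.roots := (mem_roots hW0).2 hcon.1
    have h := hder z hz
    rw [← hW, hcon.2, mul_zero] at h
    have := mul_ne_zero hl0 (Complex.ofReal_ne_zero.2 (hpos z).ne')
    exact this h.symm
  set s := W.roots.toFinset with hs
  have hsm : ∀ z, z ∈ s ↔ z ∈ W.roots := fun z => by rw [hs, Multiset.mem_toFinset]
  have hnodal : Lagrange.nodal s id = W := by
    have hsp : W = (W.roots.map fun a => X - C a).prod := 
      (IsAlgClosed.splits W).eq_prod_roots_of_monic hWm
    rw [Lagrange.nodal_eq]
    conv_rhs => rw [hsp]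
    rw [Finset.prod, hs, Multiset.toFinset_val, hnd.dedup]
    rfl
  have hcard : s.card = m + 2 := by
    have := congrArg degree hnodal
    rw [Lagrange.degree_nodal, hW, WW_degree] at this
    exact_mod_cast this
  have hWr : W.eval (r : ℂ) = - (l * (1 - r ^ 2 : ℝ)) := by
    rw [hW, WW_eval]; push_cast; ring
  have hne : ∀ z ∈ s, (r : ℂ) ≠ id z := by
    intro z hz h
    have h2 := hnorm z ((hsm z).1 hz)
    rw [← (show (r : ℂ) = z from h), Complex.norm_real, Real.norm_of_nonneg h0.le] at h2
    exact h1.ne h2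
  let t : ℂ → ℝ := fun z => (1 - r ^ 2) / ((m + 1) * ‖z - r‖ ^ 2 + (1 - r ^ 2))
  have ht : ∀ z, 0 ≤ t z := fun z => div_nonneg hr.le (hpos z).le
  have hwt : ∀ z ∈ s, W.eval (r : ℂ) * (Lagrange.nodalWeight s id z * ((r : ℂ) - z)⁻¹) = t z := by
    intro z hz
    have h := hder z ((hsm z).1 hz)
    have hp : (((m + 1) * ‖z - r‖ ^ 2 + (1 - r ^ 2) : ℝ) : ℂ) ≠ 0 :=
      Complex.ofReal_ne_zero.2 (hpos z).ne'
    have hzr : z - r ≠ 0 := sub_ne_zero.2 (hne z hz).symm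
    have hd : (derivative W).eval z ≠ 0 := by
      intro h'
      rw [← hW, h', mul_zero] at h
      exact mul_ne_zero hl0 hp h.symm
    rw [Lagrange.nodalWeight_eq_eval_derivative_nodal hz, hnodal, hWr]
    simp only [t, id]
    rw [Complex.ofReal_div, eq_div_iff hp, ← neg_sub z (r : ℂ), inv_neg]
    rw [← hW] at h
    field_simp
    linear_combination (-((1 - r ^ 2 : ℝ) : ℂ)) * h
  have hinterp : ∀ F : ℂ[X], F.degree < ((m + 2 : ℕ) : WithBot ℕ) →
      F.eval (r : ℂ) = ∑ z ∈ s, (t z : ℂ) * F.eval z := by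
    intro F hF
    have h := Lagrange.eq_interpolate (s := s) (v := id) (f := F)
      (Function.injective_id.injOn) (by rw [hcard]; exact hF)
    conv_lhs => rw [h]
    rw [Lagrange.eval_interpolate_not_at_node _ hne, hnodal, Finset.mul_sum]
    refine Finset.sum_congr rfl fun z hz => ?_
    rw [← hwt z hz]
    simp only [id]
    ring
  have hsum : ∑ z ∈ s, t z = 1 := by
    have := hinterp 1 (by rw [degree_one]; exact_mod_cast (by omega : 0 < m + 2))
    simp only [eval_one, mul_one] at this
    exact_mod_cast this.symm
  have hmain := hinterp (Q - C (Q.coeff (m + 2)) * W) (by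
    rw [degree_lt_iff_coeff_zero]
    intro k hk
    have hWd : W.natDegree = m + 2 := natDegree_eq_of_degree_eq_some (WW_degree _ _ _)
    rcases hk.eq_or_lt with rfl | hk
    · have : W.coeff (m + 2) = 1 := by rw [← hWd]; exact hWm
      simp [this]
    · rw [coeff_sub, coeff_C_mul, coeff_eq_zero_of_natDegree_lt (hQ.trans_lt hk),
        coeff_eq_zero_of_natDegree_lt (hWd.trans_lt hk)]
      simp)
  have hA : Q.eval (r : ℂ) + l * ((1 - r ^ 2 : ℝ) * Q.coeff (m + 2)) =
      ∑ z ∈ s, (t z : ℂ) * Q.eval z := by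
    have e1 : Q.eval (r : ℂ) + l * ((1 - r ^ 2 : ℝ) * Q.coeff (m + 2)) =
        (Q - C (Q.coeff (m + 2)) * W).eval (r : ℂ) := by
      rw [eval_sub, eval_mul, eval_C, hWr]; ring
    rw [e1, hmain]
    refine Finset.sum_congr rfl fun z hz => ?_
    have : W.eval z = 0 := (mem_roots hW0).1 ((hsm z).1 hz)
    rw [eval_sub, eval_mul, this]; simp
  rw [hA]
  calc ‖∑ z ∈ s, (t z : ℂ) * Q.eval z‖ ≤ ∑ z ∈ s, ‖(t z : ℂ) * Q.eval z‖ := norm_sum_le _ _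
    _ ≤ ∑ z ∈ s, t z * M := by
        refine Finset.sum_le_sum fun z hz => ?_
        rw [norm_mul, Complex.norm_real, Real.norm_of_nonneg (ht z)]
        exact mul_le_mul_of_nonneg_left (hM z (hnorm z ((hsm z).1 hz))) (ht z)
    _ = M := by rw [← Finset.sum_mul, hsum, one_mul]

lemma rev_eval (P : ℂ[X]) (x : ℂ) (hx : x ≠ 0) :
    P.reverse.eval x⁻¹ * x ^ P.natDegree = P.eval x := by
  letI := invertibleOfNonzero hx
  have := eval₂_reverse_mul_pow (RingHom.id ℂ) x P
  simpa [eval₂_id] using this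

theorem stmt_15 (n : ℕ) (hn : 1 < n) (P : Polynomial ℂ) (hdeg : P.natDegree = n)
    (R : ℝ) (hR : 1 ≤ R) :
    maxMod P R ≤
      R ^ n * maxMod P 1 - (R ^ n - R ^ (n - 2)) * ‖P.eval 0‖ := by
  rcases hR.eq_or_lt with rfl | hR
  · simp
  obtain ⟨m, rfl⟩ : ∃ m, n = m + 2 := ⟨n - 2, by omega⟩
  have hR0 : 0 < R := by linarith
  haveI : Nonempty (sphere (0 : ℂ) R) := ⟨⟨(R : ℂ), by simp [hR0.le]⟩⟩
  refine ciSup_le ?_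
  rintro ⟨z, hz⟩
  have hz : ‖z‖ = R := by simpa using hz
  have hz0 : z ≠ 0 := by rintro rfl; simp at hz; linarith
  have hRc : (R : ℂ) ≠ 0 := Complex.ofReal_ne_zero.2 hR0.ne'
  set c : ℂ := R / z with hc
  have hcn : ‖c‖ = 1 := by
    rw [hc, norm_div, hz, Complex.norm_real, Real.norm_of_nonneg hR0.le, div_self hR0.ne']
  have hk := key m (P.reverse.comp (C c * X))
    (by
      refine natDegree_comp_le.trans ?_
      have h1 : P.reverse.natDegree ≤ m + 2 := hdeg ▸ reverse_natDegree_le P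
      have h2 : (C c * X).natDegree ≤ 1 := by compute_degree
      nlinarith)
    R⁻¹ (inv_pos.2 hR0) (inv_lt_one_of_one_lt₀ hR) (maxMod P 1) (by
      intro w hw
      have hcw : ‖(c * w)⁻¹‖ = 1 := by simp [hcn, hw]
      have hcw0 : (c * w)⁻¹ ≠ 0 := by intro h; rw [h] at hcw; simp at hcw
      have := rev_eval P _ hcw0
      rw [inv_inv] at this
      have h2 := le_maxMod P 1 _ hcw
      rw [← this, norm_mul, norm_pow, hcw] at h2
      simpa using h2)
  have hco : ‖(P.reverse.comp (C c * X)).coeff (m + 2)‖ = ‖P.eval 0‖ := by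
    rw [comp_C_mul_X_coeff, norm_mul, norm_pow, hcn, coeff_reverse, ← hdeg, revAt_le le_rfl]
    simp [coeff_zero_eq_eval_zero]
  have hev : ‖P.eval z‖ = R ^ (m + 2) * ‖(P.reverse.comp (C c * X)).eval ((R⁻¹ : ℝ) : ℂ)‖ := by
    rw [← rev_eval P z hz0, norm_mul, norm_pow, hz, hdeg, mul_comm]
    congr 2
    rw [eval_comp]
    congr 1
    simp [hc]
    field_simp
  rw [hco] at hk
  show ‖P.eval z‖ ≤ _
  rw [hev]
  have h5 : R ^ (m + 2) * (1 - R⁻¹ ^ 2) = R ^ (m + 2) - R ^ (m + 2 - 2) := by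
    simp only [Nat.add_sub_cancel]
    field_simp
    ring
  rw [← h5]
  have := mul_le_mul_of_nonneg_left hk (pow_pos hR0 (m + 2)).le
  linarith
end
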